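/- arXiv:2504.00411 — 3 statements merged into one kernel-verified Lean document; each statement's English description precedes it below -/
import Mathlib

section
/- Let z ∼ N(0, σ²I_d) and let L : ℝ^d → ℝ be smooth with L(v) = L₀ ≠ 0 at a fixed point v. Then the covariance matrix of the likelihood ratio proxy ĝ = (1/σ²)·z·L(v+z) satisfies Var(ĝ) = (L₀²/σ²)·I + O(1) as σ → 0; i.e., σ²·Var(ĝ) → L₀²·I as σ ↓ 0. -/
open MeasureTheory Real Filter Asymptotics

/-- Density of `N(0, σ²I_d)` on `ℝ^d`. -/
noncomputable def gaussDensity (d : ℕ) (σ : ℝ) (x : EuclideanSpace ℝ (Fin d)) : ℝ :=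
  (2 * Real.pi * σ ^ 2) ^ (-(d : ℝ) / 2) * Real.exp (-‖x‖ ^ 2 / (2 * σ ^ 2))

/-- Mean of the likelihood ratio proxy `ĝ = (1/σ²)·z·L(v+z)`, componentwise. -/
noncomputable def lrMean {d : ℕ} (L : EuclideanSpace ℝ (Fin d) → ℝ)
    (v : EuclideanSpace ℝ (Fin d)) (σ : ℝ) (i : Fin d) : ℝ :=
  ∫ z, gaussDensity d σ z * ((σ ^ 2)⁻¹ * L (v + z) * z i)

/-- Covariance matrix entries of the likelihood ratio proxy `ĝ = (1/σ²)·z·L(v+z)`. -/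
noncomputable def lrCov {d : ℕ} (L : EuclideanSpace ℝ (Fin d) → ℝ)
    (v : EuclideanSpace ℝ (Fin d)) (σ : ℝ) (i j : Fin d) : ℝ :=
  ∫ z, gaussDensity d σ z *
    (((σ ^ 2)⁻¹ * L (v + z) * z i - lrMean L v σ i) *
      ((σ ^ 2)⁻¹ * L (v + z) * z j - lrMean L v σ j))


theorem gd_scale {d : ℕ} {σ : ℝ} (hσ : 0 < σ) (w : EuclideanSpace ℝ (Fin d)) :
    gaussDensity d σ (σ • w) = (σ ^ d)⁻¹ * gaussDensity d 1 w := by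
  unfold gaussDensity
  have h1 : (2 * Real.pi * σ ^ 2) ^ (-(d : ℝ) / 2)
      = (σ ^ d)⁻¹ * (2 * Real.pi * 1 ^ 2) ^ (-(d : ℝ) / 2) := by
    rw [Real.mul_rpow (by positivity) (by positivity), ← Real.rpow_natCast σ 2,
      ← Real.rpow_mul hσ.le]
    have : ((2 : ℕ) : ℝ) * (-(d : ℝ) / 2) = -(d : ℝ) := by push_cast; ring
    rw [this, Real.rpow_neg hσ.le, Real.rpow_natCast]
    simp [mul_comm]
  have h2 : -‖σ • w‖ ^ 2 / (2 * σ ^ 2) = -‖w‖ ^ 2 / (2 * 1 ^ 2) := by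
    rw [norm_smul, Real.norm_of_nonneg hσ.le]
    field_simp
  rw [h1, h2]; ring

theorem gd_integral_scale {d : ℕ} {σ : ℝ} (hσ : 0 < σ) (F : EuclideanSpace ℝ (Fin d) → ℝ) :
    ∫ z, gaussDensity d σ z * F z = ∫ w, gaussDensity d 1 w * F (σ • w) := by
  have h := Measure.integral_comp_smul (volume : Measure (EuclideanSpace ℝ (Fin d)))
    (fun z => gaussDensity d σ z * F z) σ
  simp only [gd_scale hσ, mul_assoc, integral_const_mul, finrank_euclideanSpace, Fintype.card_fin,
    smul_eq_mul] at h
  rw [abs_of_pos (by positivity)] at h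
  exact (mul_left_cancel₀ (by positivity) h).symm

theorem gd_nonneg {d : ℕ} (w : EuclideanSpace ℝ (Fin d)) : 0 ≤ gaussDensity d 1 w := by
  unfold gaussDensity; positivity

theorem gd_cont {d : ℕ} : Continuous (gaussDensity d 1) := by
  unfold gaussDensity; fun_prop

theorem gd_integrable_dom {d : ℕ} :
    Integrable (fun w : EuclideanSpace ℝ (Fin d) => gaussDensity d 1 w * (1 + ‖w‖ ^ 4)) := by
  have h0 : Integrable (fun w : EuclideanSpace ℝ (Fin d) => Real.exp (-(1 / 4) * ‖w‖ ^ 2)) := by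
    have := (GaussianFourier.integrable_cexp_neg_mul_sq_norm_add (b := (1 / 4 : ℝ))
      (V := EuclideanSpace ℝ (Fin d)) (by simp) 0 0).norm
    refine this.congr (Filter.Eventually.of_forall fun w => ?_)
    simp only [Complex.norm_exp]
    congr 1
    simp [← Complex.ofReal_pow]
  have h1 := h0.const_mul ((2 * Real.pi * 1 ^ 2) ^ (-(d : ℝ) / 2) * 33)
  refine h1.mono' ((gd_cont.mul (by fun_prop)).aestronglyMeasurable)
    (Filter.Eventually.of_forall fun w => ?_)
  rw [Real.norm_of_nonneg (mul_nonneg (gd_nonneg w) (by positivity))]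
  unfold gaussDensity
  have hc0 : (0 : ℝ) ≤ (2 * Real.pi * 1 ^ 2) ^ (-(d : ℝ) / 2) := by positivity
  generalize ((2 * Real.pi * 1 ^ 2) ^ (-(d : ℝ) / 2) : ℝ) = c at hc0 ⊢
  rw [mul_assoc c, mul_assoc c]
  refine mul_le_mul_of_nonneg_left ?_ hc0
  have e : -‖w‖ ^ 2 / (2 * 1 ^ 2) = -(1 / 4) * ‖w‖ ^ 2 + -(1 / 4 * ‖w‖ ^ 2) := by ring
  rw [e, Real.exp_add, mul_assoc, mul_comm 33]
  refine mul_le_mul_of_nonneg_left ?_ (Real.exp_nonneg _)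
  rw [Real.exp_neg, inv_mul_le_iff₀ (Real.exp_pos _)]
  have := Real.quadratic_le_exp_of_nonneg (x := 1 / 4 * ‖w‖ ^ 2) (by positivity)
  nlinarith [sq_nonneg (‖w‖ ^ 2), norm_nonneg w]

theorem gd_integrable {d : ℕ} {F : EuclideanSpace ℝ (Fin d) → ℝ} (hF : Continuous F) {C : ℝ}
    (hC : ∀ w, |F w| ≤ C * (1 + ‖w‖ ^ 4)) :
    Integrable (fun w => gaussDensity d 1 w * F w) := by
  refine (gd_integrable_dom.const_mul C).mono' ((gd_cont.mul hF).aestronglyMeasurable)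
    (Filter.Eventually.of_forall fun w => ?_)
  rw [Real.norm_eq_abs, abs_mul, abs_of_nonneg (gd_nonneg w)]
  nlinarith [mul_le_mul_of_nonneg_left (hC w) (gd_nonneg w)]

theorem gd_bound {d : ℕ} {F : EuclideanSpace ℝ (Fin d) → ℝ} {C : ℝ}
    (hC : ∀ w, |F w| ≤ C * (1 + ‖w‖ ^ 4)) :
    |∫ w, gaussDensity d 1 w * F w| ≤
      C * ∫ w : EuclideanSpace ℝ (Fin d), gaussDensity d 1 w * (1 + ‖w‖ ^ 4) := by
  rw [← integral_const_mul, ← Real.norm_eq_abs]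
  refine norm_integral_le_of_norm_le (gd_integrable_dom.const_mul C)
    (Filter.Eventually.of_forall fun w => ?_)
  rw [Real.norm_eq_abs, abs_mul, abs_of_nonneg (gd_nonneg w)]
  nlinarith [mul_le_mul_of_nonneg_left (hC w) (gd_nonneg w)]

theorem gd_odd {d : ℕ} {F : EuclideanSpace ℝ (Fin d) → ℝ} (hF : ∀ w, F (-w) = - F w) :
    ∫ w, gaussDensity d 1 w * F w = 0 := by
  have h := integral_neg_eq_self (fun w => gaussDensity d 1 w * F w) volume
  have e : ∀ w : EuclideanSpace ℝ (Fin d),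
      gaussDensity d 1 (-w) * F (-w) = -(gaussDensity d 1 w * F w) := by
    intro w; rw [hF]; unfold gaussDensity; rw [norm_neg]; ring
  simp only [e, integral_neg] at h
  linarith

theorem gd_prod {d : ℕ} (x : Fin d → ℝ) :
    gaussDensity d 1 (WithLp.toLp 2 x) = ∏ k, ProbabilityTheory.gaussianPDFReal 0 1 (x k) := by
  unfold gaussDensity ProbabilityTheory.gaussianPDFReal
  rw [Finset.prod_mul_distrib, ← Real.exp_sum, EuclideanSpace.norm_eq,
    Real.sq_sqrt (by positivity)]
  congr 1
  · simp only [Finset.prod_const, Finset.card_univ, Fintype.card_fin]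
    rw [Real.sqrt_eq_rpow, ← Real.rpow_neg (by positivity), ← Real.rpow_natCast _ d,
      ← Real.rpow_mul (by positivity)]
    simp only [NNReal.coe_one]
    congr 1
    · ring
    · ring
  · congr 1
    simp [← Finset.sum_div, Finset.sum_neg_distrib]

theorem gd_integral_prod {d : ℕ} (f : Fin d → ℝ → ℝ) :
    ∫ w : EuclideanSpace ℝ (Fin d), gaussDensity d 1 w * ∏ k, f k (w k)
      = ∏ k, ∫ x, f k x ∂(ProbabilityTheory.gaussianReal 0 1) := by
  rw [← (PiLp.volume_preserving_toLp (Fin d)).integral_comp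
    (MeasurableEquiv.toLp 2 _).measurableEmbedding]
  simp only [gd_prod, ← Finset.prod_mul_distrib]
  rw [integral_fintype_prod_volume_eq_prod
    (fun k x => ProbabilityTheory.gaussianPDFReal 0 1 x * f k x)]
  refine Finset.prod_congr rfl fun k _ => ?_
  rw [ProbabilityTheory.integral_gaussianReal_eq_integral_smul one_ne_zero]
  simp only [smul_eq_mul]

theorem gauss_sq : ∫ x, x * x ∂(ProbabilityTheory.gaussianReal 0 1) = 1 := by
  have h := ProbabilityTheory.variance_id_gaussianReal (μ := 0) (v := 1)
  rw [ProbabilityTheory.variance_eq_integral (by fun_prop)] at h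
  simpa [ProbabilityTheory.integral_id_gaussianReal, pow_two] using h

theorem gd_mass {d : ℕ} : ∫ w : EuclideanSpace ℝ (Fin d), gaussDensity d 1 w = 1 := by
  simpa using gd_integral_prod (d := d) (fun _ _ => 1)

theorem gd_second {d : ℕ} (i j : Fin d) :
    ∫ w : EuclideanSpace ℝ (Fin d), gaussDensity d 1 w * (w i * w j) = if i = j then 1 else 0 := by
  have h := gd_integral_prod (d := d)
    (fun k x => (if k = i then x else 1) * (if k = j then x else 1))
  simp only [Finset.prod_mul_distrib, Finset.prod_ite_eq', Finset.mem_univ, if_true] at h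
  rw [h]
  split_ifs with hij
  · subst hij
    refine Finset.prod_eq_one fun k _ => ?_
    by_cases hk : k = i
    · simp only [hk, if_true, gauss_sq]
    · simp [hk]
  · refine Finset.prod_eq_zero (Finset.mem_univ i) ?_
    simp [hij, ProbabilityTheory.integral_id_gaussianReal]

theorem coord_le {d : ℕ} (w : EuclideanSpace ℝ (Fin d)) (i : Fin d) : |w i| ≤ ‖w‖ := by
  simpa using PiLp.norm_apply_le w i

theorem pow_dom (t : ℝ) (ht : 0 ≤ t) : t ≤ 1 + t ^ 4 ∧ t ^ 2 ≤ 1 + t ^ 4 ∧ t ^ 3 ≤ 1 + t ^ 4 := by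
  refine ⟨?_, ?_, ?_⟩
  · nlinarith [sq_nonneg (t ^ 2 - 1), sq_nonneg (t - 1)]
  · nlinarith [sq_nonneg (t ^ 2 - 1)]
  · nlinarith [sq_nonneg (t ^ 2 - t), sq_nonneg (t ^ 2 - 1), sq_nonneg (t - 1)]

theorem taylor_bounds {d : ℕ} (L : EuclideanSpace ℝ (Fin d) → ℝ)
    (v : EuclideanSpace ℝ (Fin d)) (hL : ContDiff ℝ 3 L)
    (hbdd : ∀ n : ℕ, n ≤ 3 → ∃ C : ℝ, ∀ x, ‖iteratedFDeriv ℝ n L x‖ ≤ C) :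
    ∃ C : ℝ, 0 ≤ C ∧ (∀ x, |L x| ≤ C) ∧ (∀ h, |L (v + h) - L v| ≤ C * ‖h‖) ∧
      ∀ h, |L (v + h) - L v - fderiv ℝ L v h| ≤ C * ‖h‖ ^ 2 := by
  obtain ⟨C0, h0⟩ := hbdd 0 (by norm_num)
  obtain ⟨C1, h1⟩ := hbdd 1 (by norm_num)
  obtain ⟨C2, h2⟩ := hbdd 2 (by norm_num)
  simp only [norm_iteratedFDeriv_zero, norm_iteratedFDeriv_one] at h0 h1
  have hd : Differentiable ℝ L := hL.differentiable (by norm_num)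
  have hd2 : Differentiable ℝ (fderiv ℝ L) :=
    (hL.fderiv_right (m := 2) (by norm_num)).differentiable (by norm_num)
  have h2' : ∀ x, ‖fderiv ℝ (fderiv ℝ L) x‖ ≤ C2 := by
    intro x
    rw [← norm_iteratedFDeriv_one, norm_iteratedFDeriv_fderiv]
    exact h2 x
  have n0 : 0 ≤ C0 := (norm_nonneg _).trans (h0 v)
  have n1 : 0 ≤ C1 := (norm_nonneg _).trans (h1 v)
  have n2 : 0 ≤ C2 := (norm_nonneg (fderiv ℝ (fderiv ℝ L) v)).trans (h2' v)
  have lip : ∀ h, |L (v + h) - L v| ≤ C1 * ‖h‖ := by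
    intro h
    simpa using convex_univ.norm_image_sub_le_of_norm_fderiv_le (𝕜 := ℝ) (f := L) (x := v)
      (y := v + h) (fun x _ => hd x) (fun x _ => h1 x) (Set.mem_univ _) (Set.mem_univ _)
  have lip2 : ∀ x, ‖fderiv ℝ L x - fderiv ℝ L v‖ ≤ C2 * ‖x - v‖ := by
    intro x
    exact convex_univ.norm_image_sub_le_of_norm_fderiv_le (𝕜 := ℝ) (f := fderiv ℝ L) (x := v)
      (y := x) (fun x _ => hd2 x) (fun x _ => h2' x) (Set.mem_univ _) (Set.mem_univ _)
  have tay : ∀ h, |L (v + h) - L v - fderiv ℝ L v h| ≤ C2 * ‖h‖ ^ 2 := by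
    intro h
    have := (convex_closedBall v ‖h‖).norm_image_sub_le_of_norm_fderiv_le' (𝕜 := ℝ) (f := L)
      (x := v) (y := v + h) (φ := fderiv ℝ L v) (C := C2 * ‖h‖) (fun x _ => hd x)
      (fun x hx => (lip2 x).trans (mul_le_mul_of_nonneg_left
        (by simpa [dist_eq_norm] using hx) n2)) (by simp) (by simp)
    simpa [pow_two, mul_assoc] using this
  refine ⟨C0 + C1 + C2, by positivity, fun x => ?_, fun h => ?_, fun h => ?_⟩
  · have := h0 x
    rw [Real.norm_eq_abs] at this
    linarith
  · refine (lip h).trans (mul_le_mul_of_nonneg_right (by linarith) (norm_nonneg _))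
  · refine (tay h).trans (mul_le_mul_of_nonneg_right (by linarith) (by positivity))

theorem lrMean_eq {d : ℕ} (L : EuclideanSpace ℝ (Fin d) → ℝ) (v : EuclideanSpace ℝ (Fin d))
    {σ : ℝ} (hσ : 0 < σ) (i : Fin d) :
    lrMean L v σ i = σ⁻¹ * ∫ w, gaussDensity d 1 w * (L (v + σ • w) * w i) := by
  unfold lrMean
  rw [gd_integral_scale hσ (fun z => (σ ^ 2)⁻¹ * L (v + z) * z i), ← integral_const_mul]
  congr 1; ext w
  simp only [PiLp.smul_apply, smul_eq_mul]
  field_simp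

theorem lrMean_bound {d : ℕ} (L : EuclideanSpace ℝ (Fin d) → ℝ) (v : EuclideanSpace ℝ (Fin d))
    (hc : Continuous L) {C : ℝ} (hC : 0 ≤ C) (hL : ∀ x, |L x| ≤ C)
    (hlip : ∀ h, |L (v + h) - L v| ≤ C * ‖h‖)
    {σ : ℝ} (hσ : 0 < σ) (i : Fin d) :
    |lrMean L v σ i| ≤
      C * ∫ w : EuclideanSpace ℝ (Fin d), gaussDensity d 1 w * (1 + ‖w‖ ^ 4) := by
  rw [lrMean_eq L v hσ]
  have hb : ∀ w : EuclideanSpace ℝ (Fin d),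
      |(L (v + σ • w) - L v) * w i| ≤ (C * σ) * (1 + ‖w‖ ^ 4) := by
    intro w
    have h1 := hlip (σ • w)
    rw [norm_smul, Real.norm_of_nonneg hσ.le] at h1
    rw [abs_mul]
    calc _ ≤ (C * (σ * ‖w‖)) * ‖w‖ := mul_le_mul h1 (coord_le w i) (abs_nonneg _) (by positivity)
      _ = (C * σ) * ‖w‖ ^ 2 := by ring
      _ ≤ _ := mul_le_mul_of_nonneg_left (pow_dom _ (norm_nonneg w)).2.1 (by positivity)
  have e : ∫ w, gaussDensity d 1 w * (L (v + σ • w) * w i)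
      = ∫ w, gaussDensity d 1 w * ((L (v + σ • w) - L v) * w i) := by
    have i1 := gd_integrable (F := fun w => (L (v + σ • w) - L v) * w i) (by fun_prop) hb
    have i2 := gd_integrable (F := fun w : EuclideanSpace ℝ (Fin d) => L v * w i) (by fun_prop)
      (C := C) (by
        intro w
        rw [abs_mul]
        exact mul_le_mul (hL v) ((coord_le w i).trans (pow_dom _ (norm_nonneg w)).1)
          (abs_nonneg _) hC)
    have o : ∫ w : EuclideanSpace ℝ (Fin d), gaussDensity d 1 w * (L v * w i) = 0 :=
      gd_odd (by intro w; simp)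
    rw [← add_zero (∫ w, gaussDensity d 1 w * ((L (v + σ • w) - L v) * w i)), ← o,
      ← integral_add i1 i2]
    congr 1; ext w; ring
  rw [e, abs_mul, abs_of_pos (inv_pos.2 hσ), inv_mul_le_iff₀ hσ]
  refine (gd_bound hb).trans (le_of_eq (by ring))

theorem lrCov_eq {d : ℕ} (L : EuclideanSpace ℝ (Fin d) → ℝ) (v : EuclideanSpace ℝ (Fin d))
    (hc : Continuous L) {C : ℝ} (hC : 0 ≤ C) (hL : ∀ x, |L x| ≤ C)
    {σ : ℝ} (hσ : 0 < σ) (i j : Fin d) :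
    lrCov L v σ i j = (σ ^ 2)⁻¹ * (∫ w, gaussDensity d 1 w * (L (v + σ • w) ^ 2 * (w i * w j)))
      - lrMean L v σ i * lrMean L v σ j := by
  have hi := lrMean_eq L v hσ i
  have hj := lrMean_eq L v hσ j
  unfold lrCov
  set mi := lrMean L v σ i
  set mj := lrMean L v σ j
  rw [gd_integral_scale hσ (fun z => ((σ ^ 2)⁻¹ * L (v + z) * z i - mi) *
      ((σ ^ 2)⁻¹ * L (v + z) * z j - mj))]
  have k1 : ∀ k, Integrable (fun w : EuclideanSpace ℝ (Fin d) =>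
      gaussDensity d 1 w * (L (v + σ • w) * w k)) := fun k =>
    gd_integrable (C := C) (by fun_prop) (by
      intro w
      rw [abs_mul]
      exact mul_le_mul (hL _) ((coord_le w k).trans (pow_dom _ (norm_nonneg w)).1)
        (abs_nonneg _) hC)
  have k2 : Integrable (fun w : EuclideanSpace ℝ (Fin d) =>
      gaussDensity d 1 w * (L (v + σ • w) ^ 2 * (w i * w j))) :=
    gd_integrable (C := C ^ 2) (by fun_prop) (by
      intro w
      rw [abs_mul, abs_mul, abs_pow]
      refine mul_le_mul (pow_le_pow_left₀ (abs_nonneg _) (hL _) 2) ?_ (by positivity)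
        (by positivity)
      refine le_trans ?_ (pow_dom _ (norm_nonneg w)).2.1
      rw [pow_two]
      exact mul_le_mul (coord_le w i) (coord_le w j) (abs_nonneg _) (norm_nonneg _))
  have k3 : Integrable (fun w : EuclideanSpace ℝ (Fin d) => gaussDensity d 1 w) := by
    have := gd_integrable (d := d) (F := fun _ => 1) (C := 1) (by fun_prop) (by
      intro w; simp only [abs_one, one_mul]; nlinarith [pow_nonneg (norm_nonneg w) 4])
    simpa using this
  have e : ∀ w : EuclideanSpace ℝ (Fin d), gaussDensity d 1 w *
      (((σ ^ 2)⁻¹ * L (v + σ • w) * (σ • w) i - mi) * ((σ ^ 2)⁻¹ * L (v + σ • w) * (σ • w) j - mj))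
      = (σ ^ 2)⁻¹ * (gaussDensity d 1 w * (L (v + σ • w) ^ 2 * (w i * w j)))
        - (σ⁻¹ * mj) * (gaussDensity d 1 w * (L (v + σ • w) * w i))
        - (σ⁻¹ * mi) * (gaussDensity d 1 w * (L (v + σ • w) * w j))
        + (mi * mj) * gaussDensity d 1 w := by
    intro w
    simp only [PiLp.smul_apply, smul_eq_mul]
    field_simp
    ring
  simp only [e]
  rw [integral_add (((k2.const_mul _).sub' ((k1 i).const_mul _)).sub' ((k1 j).const_mul _))
      (k3.const_mul _),
    integral_sub ((k2.const_mul _).sub' ((k1 i).const_mul _)) ((k1 j).const_mul _),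
    integral_sub (k2.const_mul _) ((k1 i).const_mul _)]
  simp only [integral_const_mul, gd_mass]
  have hi' : σ⁻¹ * mj * (∫ w, gaussDensity d 1 w * (L (v + σ • w) * w i)) = mi * mj := by
    rw [hi]; ring
  have hj' : σ⁻¹ * mi * (∫ w, gaussDensity d 1 w * (L (v + σ • w) * w j)) = mi * mj := by
    rw [hj]; ring
  rw [hi', hj']; ring

theorem second_bound {d : ℕ} (L : EuclideanSpace ℝ (Fin d) → ℝ) (v : EuclideanSpace ℝ (Fin d))
    (hc : Continuous L) {C : ℝ} (hC : 0 ≤ C) (hL : ∀ x, |L x| ≤ C)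
    (hlip : ∀ h, |L (v + h) - L v| ≤ C * ‖h‖)
    (htay : ∀ h, |L (v + h) - L v - fderiv ℝ L v h| ≤ C * ‖h‖ ^ 2)
    {σ : ℝ} (hσ : 0 < σ) (i j : Fin d) :
    |(∫ w, gaussDensity d 1 w * (L (v + σ • w) ^ 2 * (w i * w j)))
      - L v ^ 2 * (if i = j then 1 else 0)| ≤
      (3 * C ^ 2 * σ ^ 2) *
        ∫ w : EuclideanSpace ℝ (Fin d), gaussDensity d 1 w * (1 + ‖w‖ ^ 4) := by
  set A := fderiv ℝ L v
  have hij : ∀ w : EuclideanSpace ℝ (Fin d), |w i * w j| ≤ ‖w‖ ^ 2 := by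
    intro w
    rw [abs_mul, pow_two]
    exact mul_le_mul (coord_le w i) (coord_le w j) (abs_nonneg _) (norm_nonneg _)
  have hb : ∀ w : EuclideanSpace ℝ (Fin d),
      |(L (v + σ • w) ^ 2 - L v ^ 2 - 2 * L v * A (σ • w)) * (w i * w j)|
        ≤ (3 * C ^ 2 * σ ^ 2) * (1 + ‖w‖ ^ 4) := by
    intro w
    have h1 := hlip (σ • w)
    have h2 := htay (σ • w)
    rw [norm_smul, Real.norm_of_nonneg hσ.le] at h1 h2
    have h3 : |L (v + σ • w) ^ 2 - L v ^ 2 - 2 * L v * A (σ • w)|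
        ≤ 3 * C ^ 2 * σ ^ 2 * ‖w‖ ^ 2 := by
      have e : L (v + σ • w) ^ 2 - L v ^ 2 - 2 * L v * A (σ • w)
        = 2 * (L v * (L (v + σ • w) - L v - A (σ • w))) + (L (v + σ • w) - L v) ^ 2 := by ring
      rw [e]
      refine (abs_add_le _ _).trans ?_
      rw [abs_mul, abs_mul, abs_pow, abs_two]
      have a := mul_le_mul (hL v) h2 (abs_nonneg _) hC
      have b := pow_le_pow_left₀ (abs_nonneg _) h1 2
      nlinarith
    rw [abs_mul]
    calc _ ≤ (3 * C ^ 2 * σ ^ 2 * ‖w‖ ^ 2) * ‖w‖ ^ 2 :=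
          mul_le_mul h3 (hij w) (abs_nonneg _) (by positivity)
      _ = (3 * C ^ 2 * σ ^ 2) * ‖w‖ ^ 4 := by ring
      _ ≤ _ := mul_le_mul_of_nonneg_left (by linarith) (by positivity)
  have i1 := gd_integrable (F := fun w =>
    (L (v + σ • w) ^ 2 - L v ^ 2 - 2 * L v * A (σ • w)) * (w i * w j)) (by fun_prop) hb
  have i2 := gd_integrable (F := fun w : EuclideanSpace ℝ (Fin d) => w i * w j) (C := 1)
    (by fun_prop) (by
      intro w
      rw [one_mul]
      exact (hij w).trans (pow_dom _ (norm_nonneg w)).2.1)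
  have i3 := gd_integrable (F := fun w : EuclideanSpace ℝ (Fin d) => A w * (w i * w j))
    (C := ‖A‖) (by fun_prop) (by
      intro w
      rw [abs_mul]
      calc _ ≤ (‖A‖ * ‖w‖) * ‖w‖ ^ 2 :=
            mul_le_mul (A.le_opNorm w) (hij w) (abs_nonneg _) (by positivity)
        _ = ‖A‖ * ‖w‖ ^ 3 := by ring
        _ ≤ _ := mul_le_mul_of_nonneg_left (pow_dom _ (norm_nonneg w)).2.2 (norm_nonneg _))
  have o : ∫ w : EuclideanSpace ℝ (Fin d), gaussDensity d 1 w * (A w * (w i * w j)) = 0 :=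
    gd_odd (by intro w; simp)
  have e : ∫ w, gaussDensity d 1 w * (L (v + σ • w) ^ 2 * (w i * w j))
      = (∫ w, gaussDensity d 1 w *
          ((L (v + σ • w) ^ 2 - L v ^ 2 - 2 * L v * A (σ • w)) * (w i * w j)))
        + L v ^ 2 * (∫ w : EuclideanSpace ℝ (Fin d), gaussDensity d 1 w * (w i * w j))
        + (2 * L v * σ) *
          ∫ w : EuclideanSpace ℝ (Fin d), gaussDensity d 1 w * (A w * (w i * w j)) := by
    rw [← integral_const_mul, ← integral_const_mul, ← integral_add i1 (i2.const_mul _),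
      ← integral_add (i1.fun_add (i2.const_mul _)) (i3.const_mul _)]
    congr 1; ext w
    simp only [map_smul, smul_eq_mul]
    ring
  rw [e, o, gd_second, mul_zero, add_zero, add_sub_cancel_right]
  exact gd_bound hb

/-- For `z ∼ N(0, σ²I_d)` and smooth `L` with `L(v) = L₀ ≠ 0`, the covariance of the
likelihood ratio proxy satisfies `Var(ĝ) = (L₀²/σ²)·I + O(1)` as `σ ↓ 0`; in particular
`σ²·Var(ĝ) → L₀²·I` entrywise as `σ ↓ 0`. -/
theorem lr_proxy_variance {d : ℕ} (L : EuclideanSpace ℝ (Fin d) → ℝ)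
    (v : EuclideanSpace ℝ (Fin d))
    (hL : ContDiff ℝ 3 L)
    (hbdd : ∀ n : ℕ, n ≤ 3 → ∃ C : ℝ, ∀ x, ‖iteratedFDeriv ℝ n L x‖ ≤ C)
    (hL0 : L v ≠ 0) :
    (∀ i j : Fin d,
      (fun σ : ℝ => lrCov L v σ i j - (L v ^ 2 / σ ^ 2) * (if i = j then 1 else 0))
        =O[nhdsWithin 0 (Set.Ioi 0)] (fun _ : ℝ => (1 : ℝ))) ∧
    (∀ i j : Fin d,
      Tendsto (fun σ : ℝ => σ ^ 2 * lrCov L v σ i j)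
        (nhdsWithin 0 (Set.Ioi 0)) (nhds (L v ^ 2 * (if i = j then 1 else 0)))) := by

  obtain ⟨C, hC, hb, hlip, htay⟩ := taylor_bounds L v hL hbdd
  have hc : Continuous L := hL.continuous
  have key : ∀ i j : Fin d, ∃ B : ℝ, ∀ σ : ℝ, 0 < σ →
      |lrCov L v σ i j - (L v ^ 2 / σ ^ 2) * (if i = j then 1 else 0)| ≤ B := by
    intro i j
    set K := ∫ w : EuclideanSpace ℝ (Fin d), gaussDensity d 1 w * (1 + ‖w‖ ^ 4) with hK
    refine ⟨3 * C ^ 2 * K + (C * K) * (C * K), fun σ hσ => ?_⟩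
    have h1 := lrMean_bound L v hc hC hb hlip hσ i
    have h2 := lrMean_bound L v hc hC hb hlip hσ j
    have h3 := second_bound L v hc hC hb hlip htay hσ i j
    rw [← hK] at h1 h2 h3
    rw [lrCov_eq L v hc hC hb hσ]
    set S := ∫ w, gaussDensity d 1 w * (L (v + σ • w) ^ 2 * (w i * w j))
    have e : (σ ^ 2)⁻¹ * S - lrMean L v σ i * lrMean L v σ j
        - (L v ^ 2 / σ ^ 2) * (if i = j then 1 else 0)
        = (σ ^ 2)⁻¹ * (S - L v ^ 2 * (if i = j then 1 else 0))
          - lrMean L v σ i * lrMean L v σ j := by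
      ring
    rw [e]
    refine (abs_sub _ _).trans (add_le_add ?_ ?_)
    · rw [abs_mul, abs_of_pos (by positivity), inv_mul_le_iff₀ (by positivity)]
      exact h3.trans (le_of_eq (by ring))
    · rw [abs_mul]
      exact mul_le_mul h1 h2 (abs_nonneg _) ((abs_nonneg _).trans h1)
  have hO : ∀ i j : Fin d,
      (fun σ : ℝ => lrCov L v σ i j - (L v ^ 2 / σ ^ 2) * (if i = j then 1 else 0))
        =O[nhdsWithin 0 (Set.Ioi 0)] (fun _ : ℝ => (1 : ℝ)) := by
    intro i j
    obtain ⟨B, hB⟩ := key i j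
    refine IsBigO.of_bound B ?_
    filter_upwards [self_mem_nhdsWithin] with σ hσ
    simpa using hB σ hσ
  refine ⟨hO, fun i j => ?_⟩
  have hs : Tendsto (fun σ : ℝ => σ ^ 2) (nhdsWithin 0 (Set.Ioi 0)) (nhds 0) := by
    have : Tendsto (fun σ : ℝ => σ ^ 2) (nhds 0) (nhds (0 ^ 2)) := (continuous_pow 2).tendsto 0
    rw [zero_pow two_ne_zero] at this
    exact this.mono_left nhdsWithin_le_nhds
  have h0 : Tendsto (fun σ : ℝ => σ ^ 2 *
      (lrCov L v σ i j - (L v ^ 2 / σ ^ 2) * (if i = j then 1 else 0)))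
      (nhdsWithin 0 (Set.Ioi 0)) (nhds 0) := by
    have h := (isBigO_refl (fun σ : ℝ => σ ^ 2) (nhdsWithin 0 (Set.Ioi 0))).mul (hO i j)
    refine h.trans_tendsto ?_
    simpa using hs
  have h1 := h0.add_const (L v ^ 2 * (if i = j then 1 else 0))
  rw [zero_add] at h1
  refine h1.congr' ?_
  filter_upwards [self_mem_nhdsWithin] with σ hσ
  have : σ ≠ 0 := ne_of_gt hσ
  have e : σ ^ 2 * (L v ^ 2 / σ ^ 2) = L v ^ 2 := by field_simp
  rw [mul_sub, ← mul_assoc, e]; ring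
end

section
/- Let μ₀ be the density of N(0, σ²) on ℝ and let ν = (1−q)μ₀ + q·Γ₁μ₀ be the mixture with the translated density Γ₁μ₀(ω) = μ₀(ω−1). If q ≤ 1/5, σ ≥ 4, and α > 1 satisfies α ≤ (1/2)σ²A − 2ln σ and α ≤ ((1/2)σ²A² − ln 5 − 2ln σ)/(A + ln(qα) + 1/(2σ²)) with A = ln(1 + 1/(q(α−1))), then the Rényi divergence of order α between μ₀ and ν satisfies D_α(μ₀‖ν) ≤ 2q²α/σ². -/
open MeasureTheory Real

/-- Density of `N(0, σ²)` on `ℝ`. -/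
noncomputable def gauss1D (σ : ℝ) (ω : ℝ) : ℝ :=
  (2 * Real.pi * σ ^ 2) ^ (-(1 : ℝ) / 2) * Real.exp (-ω ^ 2 / (2 * σ ^ 2))

lemma gauss1D_eq_pdf (σ : ℝ) :
    gauss1D σ = ProbabilityTheory.gaussianPDFReal 0 (Real.toNNReal (σ ^ 2)) := by
  funext ω
  have h0 : (0 : ℝ) ≤ σ ^ 2 := by positivity
  have h1 : (0 : ℝ) ≤ 2 * Real.pi * σ ^ 2 := by positivity
  unfold gauss1D ProbabilityTheory.gaussianPDFReal
  rw [Real.coe_toNNReal _ h0, Real.sqrt_eq_rpow, ← Real.rpow_neg h1]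
  norm_num

lemma gauss1D_pos {σ : ℝ} (hσ : 4 ≤ σ) (ω : ℝ) : 0 < gauss1D σ ω := by
  have : 0 < σ := by linarith
  unfold gauss1D
  positivity

lemma gauss1D_integrable {σ : ℝ} : Integrable (gauss1D σ) := by
  rw [gauss1D_eq_pdf]
  exact ProbabilityTheory.integrable_gaussianPDFReal _ _

lemma gauss1D_integral {σ : ℝ} (hσ : 4 ≤ σ) : ∫ ω, gauss1D σ ω = 1 := by
  rw [gauss1D_eq_pdf]
  apply ProbabilityTheory.integral_gaussianPDFReal_eq_one
  have : 0 < σ ^ 2 := by have : 0 < σ := by linarith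
                         positivity
  simpa using this.ne'

lemma gauss1D_tilt {σ : ℝ} (hσ : 4 ≤ σ) (t ω : ℝ) :
    gauss1D σ ω * Real.exp (t * ((2 * ω - 1) / (2 * σ ^ 2)))
      = Real.exp ((t ^ 2 - t) / (2 * σ ^ 2)) * gauss1D σ (ω - t) := by
  have h : σ ≠ 0 := by linarith
  unfold gauss1D
  rw [mul_assoc, mul_left_comm (Real.exp ((t ^ 2 - t) / (2 * σ ^ 2))), ← Real.exp_add,
    ← Real.exp_add]
  congr 2
  field_simp
  ring

lemma tilt_integrable {σ : ℝ} (hσ : 4 ≤ σ) (t : ℝ) :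
    Integrable (fun ω => gauss1D σ ω * Real.exp (t * ((2 * ω - 1) / (2 * σ ^ 2)))) := by
  simp_rw [gauss1D_tilt hσ]
  exact (gauss1D_integrable.comp_sub_right t).const_mul _

lemma tilt_integral {σ : ℝ} (hσ : 4 ≤ σ) (t : ℝ) :
    ∫ ω, gauss1D σ ω * Real.exp (t * ((2 * ω - 1) / (2 * σ ^ 2)))
      = Real.exp ((t ^ 2 - t) / (2 * σ ^ 2)) := by
  simp_rw [gauss1D_tilt hσ]
  rw [integral_const_mul, integral_sub_right_eq_self (gauss1D σ) t, gauss1D_integral hσ, mul_one]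

lemma integrand_eq {σ : ℝ} (hσ : 4 ≤ σ) {q : ℝ} (hq0 : 0 < q) (hq : q ≤ 1 / 5) (α ω : ℝ) :
    gauss1D σ ω ^ α * ((1 - q) * gauss1D σ ω + q * gauss1D σ (ω - 1)) ^ (1 - α)
      = gauss1D σ ω *
        (1 - q + q * Real.exp ((2 * ω - 1) / (2 * σ ^ 2))) ^ (-(α - 1)) := by
  have hg := gauss1D_pos hσ ω
  have h1 := gauss1D_tilt hσ 1 ω
  norm_num at h1
  have he := Real.exp_pos ((2 * ω - 1) / (2 * σ ^ 2))
  rw [← h1]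
  have h2 : (1 - q) * gauss1D σ ω + q * (gauss1D σ ω * Real.exp ((2 * ω - 1) / (2 * σ ^ 2)))
      = gauss1D σ ω * (1 - q + q * Real.exp ((2 * ω - 1) / (2 * σ ^ 2))) := by ring
  have h3 : 0 ≤ 1 - q + q * Real.exp ((2 * ω - 1) / (2 * σ ^ 2)) := by
    have := mul_pos hq0 he
    linarith
  rw [h2, Real.mul_rpow hg.le h3, ← mul_assoc, ← Real.rpow_add hg]
  have : α + (1 - α) = 1 := by ring
  rw [this, Real.rpow_one, neg_sub]

/-- Weighted AM-GM bound. -/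
lemma amgm_bound {q n : ℝ} (hq0 : 0 < q) (hq : q ≤ 1 / 5) (hn : 0 < n) (x : ℝ) :
    (1 - q + q * Real.exp x) ^ (-n) ≤ Real.exp ((-(q * n)) * x) := by
  have h := Real.geom_mean_le_arith_mean2_weighted (w₁ := 1 - q) (w₂ := q) (p₁ := 1)
    (p₂ := Real.exp x) (by linarith) hq0.le zero_le_one (Real.exp_pos x).le (by ring)
  rw [Real.one_rpow, one_mul, mul_one, ← Real.exp_mul] at h
  have h2 := Real.rpow_le_rpow_of_nonpos (Real.exp_pos _) h (show -n ≤ 0 by linarith)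
  rw [← Real.exp_mul] at h2
  convert h2 using 2
  ring

lemma quad_bound {n u : ℝ} (hn : 0 < n) (hu : -(1 / 5) ≤ u) (hnu : -(1 / 3) ≤ n * u) :
    (1 + u) ^ (-n) ≤ 1 - n * u + 3 / 2 * (n * (n + 1)) * u ^ 2 := by
  have hpos : 0 < 1 + u := by linarith
  rcases le_total 1 n with h | h
  · have hb := one_add_mul_self_le_rpow_one_add (s := u) (by linarith) h
    have hp : 0 < 1 + n * u := by linarith
    rw [Real.rpow_neg hpos.le]
    calc ((1 + u) ^ n)⁻¹ ≤ (1 + n * u)⁻¹ := inv_anti₀ hp hb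
      _ ≤ 1 - n * u + 3 / 2 * (n * u) ^ 2 := by
        rw [inv_le_iff_one_le_mul₀ hp]
        nlinarith [mul_nonneg (sq_nonneg (n * u)) (show 0 ≤ 1 + 3 * (n * u) by linarith)]
      _ ≤ _ := by nlinarith [mul_nonneg hn.le (sq_nonneg u)]
  · have hinv : 0 < (1 + u)⁻¹ := inv_pos.2 hpos
    have hb := rpow_one_add_le_one_add_mul_self (s := (1 + u)⁻¹ - 1) (by linarith) hn.le h
    rw [add_sub_cancel, Real.inv_rpow hpos.le, ← Real.rpow_neg hpos.le] at hb
    refine hb.trans ?_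
    have h2 : (1 + u)⁻¹ - 1 ≤ -u + 3 / 2 * u ^ 2 := by
      have : (1 + u)⁻¹ ≤ 1 - u + 3 / 2 * u ^ 2 := by
        rw [inv_le_iff_one_le_mul₀ hpos]
        nlinarith [mul_nonneg (sq_nonneg u) (show 0 ≤ 1 + 3 * u by linarith)]
      linarith
    have h3 := mul_le_mul_of_nonneg_left h2 hn.le
    nlinarith [sq_nonneg (n * u)]

lemma log_le_of_le_exp {I c : ℝ} (h0 : 0 ≤ I) (hc : 0 ≤ c) (h : I ≤ Real.exp c) :
    Real.log I ≤ c := by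
  rcases h0.eq_or_lt with h1 | h1
  · rw [← h1, Real.log_zero]; exact hc
  · rwa [Real.log_le_iff_le_exp h1]

/-- One-dimensional Sampled Gaussian Mechanism bound (Mironov et al.): for the mixture
`ν = (1−q)μ₀ + q·Γ₁μ₀` of `μ₀ = N(0,σ²)` with its unit translate, under the stated
conditions on `q`, `σ`, `α`, the Rényi divergence satisfies `D_α(μ₀‖ν) ≤ 2q²α/σ²`. -/
theorem sgm_one_dim_renyi_bound (q σ α A : ℝ)
    (hq0 : 0 < q) (hq : q ≤ 1 / 5) (hσ : 4 ≤ σ)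
    (hA : A = Real.log (1 + 1 / (q * (α - 1))))
    (hα1 : 1 < α)
    (hα2 : α ≤ (1 / 2) * σ ^ 2 * A - 2 * Real.log σ)
    (hα3 : α ≤ ((1 / 2) * σ ^ 2 * A ^ 2 - Real.log 5 - 2 * Real.log σ) /
      (A + Real.log (q * α) + 1 / (2 * σ ^ 2))) :
    (α - 1)⁻¹ * Real.log (∫ ω : ℝ,
        gauss1D σ ω ^ α * ((1 - q) * gauss1D σ ω + q * gauss1D σ (ω - 1)) ^ (1 - α)) ≤
      2 * q ^ 2 * α / σ ^ 2 := by
  clear hα2 hα3 hA A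
  simp_rw [integrand_eq hσ hq0 hq]
  obtain ⟨n, rfl⟩ : ∃ n, α = n + 1 := ⟨α - 1, by ring⟩
  have hn : 0 < n := by linarith
  simp only [add_sub_cancel_right]
  have hσ0 : 0 < σ := by linarith
  have hpos : ∀ ω : ℝ, 0 ≤ gauss1D σ ω *
      (1 - q + q * Real.exp ((2 * ω - 1) / (2 * σ ^ 2))) ^ (-n) := fun ω => by
    have h1 := mul_pos hq0 (Real.exp_pos ((2 * ω - 1) / (2 * σ ^ 2)))
    exact mul_nonneg (gauss1D_pos hσ ω).le (Real.rpow_nonneg (by linarith) _)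
  have hI0 : 0 ≤ ∫ ω : ℝ, gauss1D σ ω *
      (1 - q + q * Real.exp ((2 * ω - 1) / (2 * σ ^ 2))) ^ (-n) := integral_nonneg fun ω => hpos ω
  rw [inv_mul_le_iff₀ hn]
  refine log_le_of_le_exp hI0 (by positivity) ?_
  rcases le_total (1 / 3) (q * n) with hc | hc
  · have hle := integral_mono_of_nonneg (μ := volume) (Filter.Eventually.of_forall hpos)
      (tilt_integrable hσ (-(q * n))) (Filter.Eventually.of_forall fun ω =>
        mul_le_mul_of_nonneg_left (amgm_bound hq0 hq hn _) (gauss1D_pos hσ ω).le)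
    refine hle.trans ?_
    rw [tilt_integral hσ, Real.exp_le_exp, div_le_iff₀ (by positivity)]
    have : n * (2 * q ^ 2 * (n + 1) / σ ^ 2) * (2 * σ ^ 2) = 4 * q ^ 2 * n * (n + 1) := by
      field_simp
      ring
    rw [this]
    nlinarith [mul_nonneg (mul_nonneg hq0.le hn.le) (show 0 ≤ 3 * (q * n) - 1 by linarith),
      mul_nonneg (mul_nonneg hq0.le hn.le) hq0.le]
  · set K := 3 / 2 * (n * (n + 1)) with hK
    have hK0 : 0 < K := by positivity
    have hi0 := gauss1D_integrable (σ := σ)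
    have hi1 := tilt_integrable hσ 1
    have hi2 := tilt_integrable hσ 2
    have hle := integral_mono_of_nonneg (μ := volume) (g := fun ω =>
        (1 + n * q + K * q ^ 2) * gauss1D σ ω
        + (-(n * q) - 2 * K * q ^ 2) *
          (gauss1D σ ω * Real.exp (1 * ((2 * ω - 1) / (2 * σ ^ 2))))
        + K * q ^ 2 * (gauss1D σ ω * Real.exp (2 * ((2 * ω - 1) / (2 * σ ^ 2)))))
      (Filter.Eventually.of_forall hpos)
      (((hi0.const_mul _).add (hi1.const_mul _)).add (hi2.const_mul _))
      (Filter.Eventually.of_forall fun ω => by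
        set x := (2 * ω - 1) / (2 * σ ^ 2)
        have he := Real.exp_pos x
        have hqe := mul_pos hq0 he
        have hqb := quad_bound (n := n) (u := q * (Real.exp x - 1)) hn (by nlinarith)
          (by nlinarith [mul_pos hn hqe])
        have h2 := mul_le_mul_of_nonneg_left hqb (gauss1D_pos hσ ω).le
        have h3 : Real.exp (2 * x) = Real.exp x ^ 2 := by
          rw [← Real.exp_nat_mul]; norm_num
        simp only [one_mul]
        rw [h3]
        have h4 : 1 - q + q * Real.exp x = 1 + q * (Real.exp x - 1) := by ring
        rw [h4]
        refine h2.trans (le_of_eq ?_)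
        rw [← hK]
        ring)
    refine hle.trans ?_
    have hi01 : Integrable (fun ω => (1 + n * q + K * q ^ 2) * gauss1D σ ω
        + (-(n * q) - 2 * K * q ^ 2) *
          (gauss1D σ ω * Real.exp (1 * ((2 * ω - 1) / (2 * σ ^ 2))))) :=
      (hi0.const_mul _).add (hi1.const_mul _)
    rw [integral_add hi01 (hi2.const_mul _),
      integral_add (hi0.const_mul _) (hi1.const_mul _), integral_const_mul, integral_const_mul,
      integral_const_mul, gauss1D_integral hσ, tilt_integral hσ, tilt_integral hσ]
    have e1 : (((1 : ℝ) ^ 2 - 1) / (2 * σ ^ 2)) = 0 := by norm_num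
    have e2 : (((2 : ℝ) ^ 2 - 2) / (2 * σ ^ 2)) = 1 / σ ^ 2 := by field_simp; norm_num
    rw [e1, e2, Real.exp_zero]
    refine le_trans ?_ (Real.add_one_le_exp _)
    set s := 1 / σ ^ 2 with hs
    have hs0 : 0 < s := by positivity
    have hs1 : s ≤ 1 / 16 := by
      rw [hs]
      apply one_div_le_one_div_of_le <;> nlinarith
    have hexp : Real.exp s ≤ 1 + 4 / 3 * s := by
      have h1 := Real.add_one_le_exp (-s)
      have h2 : Real.exp s * Real.exp (-s) = 1 := by rw [← Real.exp_add]; simp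
      have h3 := Real.exp_pos s
      have h4 : Real.exp s * (1 - s) ≤ 1 := by nlinarith
      by_contra hcon
      push Not at hcon
      nlinarith
    have e3 : n * (2 * q ^ 2 * (n + 1) / σ ^ 2) = 4 / 3 * K * q ^ 2 * s := by
      rw [hK, hs]; field_simp; ring
    rw [e3]
    have := mul_le_mul_of_nonneg_left hexp (show 0 ≤ K * q ^ 2 by positivity)
    nlinarith
end

section
/- Let f₀ be a mixture of centered Gaussian densities f₀(ω) = c₀ Σ_{J: |J|≥L} q^{|J|}(1−q)^{N−|J|} μ(ω; 0, Σ_J) on ℝ^d, where each Σ_J satisfies λ_min(Σ_J) ≥ σ². If f₁ is the corresponding mixture where each component is replaced by ((1−q)·μ(·;0,Σ_J) + q·μ(·−ν;0,Σ_J)) for a fixed shift ν, then E_{ω∼f₀}[(f₀(ω)/f₁(ω))^λ] is bounded above by the corresponding ratio moment for a single isotropic Gaussian: E_{ω∼μ_σ}[(μ_σ(ω)/((1−q)μ_σ + qΓ_ν μ_σ)(ω))^λ], where μ_σ = N(0, σ²I). -/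
open MeasureTheory Real Finset Matrix

/-- Multivariate Gaussian density on `ℝ^d` with mean `m` and covariance `S`. -/
noncomputable def gaussMat (d : ℕ) (m : Fin d → ℝ) (S : Matrix (Fin d) (Fin d) ℝ)
    (ω : Fin d → ℝ) : ℝ :=
  ((2 * Real.pi) ^ d * S.det) ^ (-(1 : ℝ) / 2) *
    Real.exp (-(1 / 2) * ((ω - m) ⬝ᵥ S⁻¹.mulVec (ω - m)))

/-- Isotropic Gaussian density `N(0, σ²I)` on `ℝ^d`. -/
noncomputable def gaussIso (d : ℕ) (σ : ℝ) (ω : Fin d → ℝ) : ℝ :=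
  (2 * Real.pi * σ ^ 2) ^ (-(d : ℝ) / 2) * Real.exp (-(ω ⬝ᵥ ω) / (2 * σ ^ 2))


lemma rpow_neg_tangent {x y l : ℝ} (hx : 0 < x) (hy : 0 < y) (hl : 0 ≤ l) :
    x ^ (-l) - l * x ^ (-l - 1) * (y - x) ≤ y ^ (-l) := by
  have ht : 0 < y / x := div_pos hy hx
  have h1 : 1 - l * (y / x - 1) ≤ (y / x) ^ (-l) := by
    rw [Real.rpow_def_of_pos ht]
    have := Real.add_one_le_exp (Real.log (y / x) * -l)
    have := Real.log_le_sub_one_of_pos ht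
    nlinarith
  have hxl : 0 < x ^ (-l) := Real.rpow_pos_of_pos hx _
  have h2 : y ^ (-l) = x ^ (-l) * (y / x) ^ (-l) := by
    rw [← Real.mul_rpow hx.le ht.le]; congr 1; field_simp
  have h3 : x ^ (-l - 1) = x ^ (-l) / x := by
    rw [Real.rpow_sub hx, Real.rpow_one]
  rw [h2, h3]
  calc _ = x ^ (-l) * (1 - l * (y / x - 1)) := by field_simp
    _ ≤ _ := by gcongr

/-- Joint convexity of `(p, r) ↦ (p / r) ^ l * p`. -/
lemma jensen_ratio {ι : Type*} (s : Finset ι) (w p r : ι → ℝ) {l : ℝ} (hl : 0 ≤ l)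
    (hw : ∀ i ∈ s, 0 ≤ w i) (hws : 0 < ∑ i ∈ s, w i)
    (hp : ∀ i ∈ s, 0 < p i) (hr : ∀ i ∈ s, 0 < r i) :
    ((∑ i ∈ s, w i * p i) / (∑ i ∈ s, w i * r i)) ^ l * (∑ i ∈ s, w i * p i) ≤
      ∑ i ∈ s, w i * ((p i / r i) ^ l * p i) := by
  obtain ⟨j, hj, hjw⟩ : ∃ j ∈ s, 0 < w j := by
    by_contra! h
    exact absurd (Finset.sum_nonpos h) (not_le.mpr hws)
  have hP : 0 < ∑ i ∈ s, w i * p i :=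
    Finset.sum_pos' (fun i hi => mul_nonneg (hw i hi) (hp i hi).le) ⟨j, hj, mul_pos hjw (hp j hj)⟩
  have hR : 0 < ∑ i ∈ s, w i * r i :=
    Finset.sum_pos' (fun i hi => mul_nonneg (hw i hi) (hr i hi).le) ⟨j, hj, mul_pos hjw (hr j hj)⟩
  set P := ∑ i ∈ s, w i * p i with hPd
  set R := ∑ i ∈ s, w i * r i with hRd
  have key : ∀ a b : ℝ, 0 < a → 0 < b → (a / b) ^ l = (b / a) ^ (-l) := by
    intro a b ha hb
    rw [Real.rpow_neg (by positivity), ← Real.inv_rpow (by positivity), inv_div]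
  set x := R / P with hx
  have hx0 : 0 < x := div_pos hR hP
  rw [key P R hP hR]
  have h : ∀ i ∈ s, w i * p i * (x ^ (-l)) - l * x ^ (-l - 1) * (w i * r i - x * (w i * p i))
      ≤ w i * ((p i / r i) ^ l * p i) := by
    intro i hi
    have hpi := hp i hi
    rw [key _ _ hpi (hr i hi)]
    have := rpow_neg_tangent hx0 (div_pos (hr i hi) hpi) hl
    calc _ = w i * ((x ^ (-l) - l * x ^ (-l - 1) * (r i / p i - x)) * p i) := by
          field_simp
      _ ≤ _ := by have := hw i hi; gcongr
  refine le_trans (le_of_eq ?_) (Finset.sum_le_sum h)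
  rw [Finset.sum_sub_distrib, ← Finset.sum_mul, ← Finset.mul_sum, Finset.sum_sub_distrib,
    ← Finset.mul_sum, ← hPd, ← hRd]
  have : R - x * P = 0 := by rw [hx]; field_simp; ring
  rw [this]; ring

lemma phi_integrable (q l c : ℝ) (hq0 : 0 < q) (hq1 : q ≤ 1) (hl : 0 ≤ l) (v : NNReal) :
    Integrable (fun x : ℝ => (1 - q + q * Real.exp (x - c)) ^ (-l))
      (ProbabilityTheory.gaussianReal 0 v) := by
  have hpos : ∀ x : ℝ, 0 < 1 - q + q * Real.exp (x - c) := fun x => by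
    have : 0 < q * Real.exp (x - c) := by positivity
    linarith
  refine Integrable.mono'
    ((ProbabilityTheory.integrable_exp_mul_gaussianReal (μ := 0) (v := v) (-l)).const_mul
      (q ^ (-l) * Real.exp (l * c))) ?_ ?_
  · refine Measurable.aestronglyMeasurable ?_
    fun_prop
  · refine ae_of_all _ fun x => ?_
    rw [Real.norm_of_nonneg (Real.rpow_nonneg (hpos x).le _)]
    calc _ ≤ (q * Real.exp (x - c)) ^ (-l) := by
          apply Real.rpow_le_rpow_of_nonpos (by positivity) (by linarith) (by linarith)
      _ = _ := by
          rw [Real.mul_rpow hq0.le (Real.exp_pos _).le, ← Real.exp_mul, mul_assoc, ← Real.exp_add]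
          ring_nf

lemma exp_gauss_integrable (v : NNReal) (c : ℝ) : Integrable (fun y : ℝ => Real.exp (y - c))
      (ProbabilityTheory.gaussianReal 0 v) := by
  have := (ProbabilityTheory.integrable_exp_mul_gaussianReal (μ := 0) (v := v) 1).mul_const
      (Real.exp (-c))
  simpa [sub_eq_add_neg, Real.exp_add] using this

lemma exp_gauss_integral (v : NNReal) : ∫ y : ℝ, Real.exp (y - v / 2)
      ∂(ProbabilityTheory.gaussianReal 0 v) = 1 := by
  have h := congrFun (ProbabilityTheory.mgf_id_gaussianReal (μ := 0) (v := v)) 1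
  simp only [ProbabilityTheory.mgf, id, one_mul, zero_mul, zero_add, one_pow, mul_one] at h
  simp_rw [sub_eq_add_neg, Real.exp_add]
  rw [integral_mul_const, h, ← Real.exp_add]
  simp

lemma G_mono (q l : ℝ) (hq0 : 0 < q) (hq1 : q ≤ 1) (hl : 0 ≤ l) (v u : NNReal) :
    ∫ x : ℝ, (1 - q + q * Real.exp (x - v / 2)) ^ (-l) ∂(ProbabilityTheory.gaussianReal 0 v) ≤
    ∫ x : ℝ, (1 - q + q * Real.exp (x - (v + u : NNReal) / 2)) ^ (-l)
      ∂(ProbabilityTheory.gaussianReal 0 (v + u)) := by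
  have hconv : ProbabilityTheory.gaussianReal 0 (v + u) =
      (ProbabilityTheory.gaussianReal 0 v).conv (ProbabilityTheory.gaussianReal 0 u) := by
    rw [ProbabilityTheory.gaussianReal_conv_gaussianReal]; simp
  have hint := phi_integrable q l ((v + u : NNReal) / 2) hq0 hq1 hl (v + u)
  rw [hconv] at hint ⊢
  rw [integral_conv hint]
  have h2 := (integrable_conv_iff hint.1).1 hint
  have hpos : ∀ x : ℝ, 0 < 1 - q + q * Real.exp x := fun x => by
    have : 0 < q * Real.exp x := by positivity
    linarith
  have h3 : Integrable (fun x => ∫ y, (1 - q + q * Real.exp (x + y - (v + u : NNReal) / 2)) ^ (-l)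
      ∂(ProbabilityTheory.gaussianReal 0 u)) (ProbabilityTheory.gaussianReal 0 v) := by
    refine h2.2.congr (ae_of_all _ fun x => ?_)
    refine integral_congr_ae (ae_of_all _ fun y => ?_)
    exact Real.norm_of_nonneg (Real.rpow_nonneg (hpos _).le _)
  refine integral_mono_ae (phi_integrable q l _ hq0 hq1 hl v) h3 ?_
  filter_upwards [h2.1] with x hx
  set a := Real.exp (x - v / 2) with ha
  set A := 1 - q + q * a with hA
  have hA0 : 0 < A := hpos _
  have hi2 : Integrable (fun y : ℝ => A ^ (-l) - l * A ^ (-l - 1) * (q * a) *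
      (Real.exp (y - u / 2) - 1)) (ProbabilityTheory.gaussianReal 0 u) :=
    (integrable_const _).sub (((exp_gauss_integrable u _).sub (integrable_const _)).const_mul _)
  have := integral_mono hi2 hx (fun y => by
    have h := rpow_neg_tangent hA0 (hpos (x + y - (v + u : NNReal) / 2)) hl
    refine le_trans (le_of_eq ?_) h
    have : Real.exp (x + y - (v + u : NNReal) / 2) = a * Real.exp (y - u / 2) := by
      rw [ha, ← Real.exp_add]; push_cast; ring_nf
    rw [this]; simp only [hA]; ring)
  have hi3 : Integrable (fun y : ℝ => l * A ^ (-l - 1) * (q * a) * (Real.exp (y - u / 2) - 1))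
      (ProbabilityTheory.gaussianReal 0 u) :=
    ((exp_gauss_integrable u _).sub (integrable_const _)).const_mul _
  rw [integral_sub (integrable_const _) hi3, integral_const_mul,
    integral_sub (exp_gauss_integrable u _) (integrable_const _), exp_gauss_integral] at this
  simpa using this

lemma exists_symm_sqrt {d : ℕ} {S : Matrix (Fin d) (Fin d) ℝ} (hS : S.PosDef) :
    ∃ B : Matrix (Fin d) (Fin d) ℝ, Bᵀ = B ∧ B * B = S ∧ B.det ≠ 0 := by
  open scoped MatrixOrder in
  have h := CFC.sqrt_mul_sqrt_self S hS.posSemidef.nonneg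
  open scoped MatrixOrder in
  have h2 := (CFC.sqrt_nonneg S).posSemidef.isHermitian
  refine ⟨_, ?_, h, ?_⟩
  · simpa [Matrix.IsHermitian] using h2
  · intro h0
    have := hS.det_pos
    rw [← h, Matrix.det_mul, h0] at this
    simp at this

lemma det_part {d : ℕ} {B : Matrix (Fin d) (Fin d) ℝ} (hB : B.det ≠ 0) :
    ((2 * Real.pi) ^ d * (B * B).det) ^ (-(1 : ℝ) / 2) =
      (2 * Real.pi) ^ (-(d : ℝ) / 2) * |B.det⁻¹| := by
  rw [Matrix.det_mul, Real.mul_rpow (by positivity) (mul_self_nonneg _), ← Real.rpow_natCast,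
    ← Real.rpow_mul (by positivity), ← abs_mul_abs_self B.det, ← sq, ← Real.rpow_natCast,
    ← Real.rpow_mul (abs_nonneg _), abs_inv, ← Real.rpow_neg_one]
  congr 2 <;> push_cast <;> ring

lemma quad_part {d : ℕ} {B : Matrix (Fin d) (Fin d) ℝ} (hBs : Bᵀ = B) (hB : B.det ≠ 0)
    (z : Fin d → ℝ) : (B *ᵥ z) ⬝ᵥ ((B * B)⁻¹ *ᵥ (B *ᵥ z)) = z ⬝ᵥ z := by
  have hu : IsUnit B.det := isUnit_iff_ne_zero.mpr hB
  rw [Matrix.mulVec_mulVec, Matrix.mul_inv_rev, Matrix.mul_assoc, Matrix.nonsing_inv_mul _ hu,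
    Matrix.mul_one, Matrix.dotProduct_mulVec, Matrix.vecMul_mulVec, hBs, Matrix.mul_nonsing_inv _ hu]
  simp

lemma gaussMat_pos {d : ℕ} {S : Matrix (Fin d) (Fin d) ℝ} (hS : S.PosDef) (m ω : Fin d → ℝ) :
    0 < gaussMat d m S ω := by
  have := hS.det_pos
  unfold gaussMat
  positivity

lemma gaussMat_cont {d : ℕ} (S : Matrix (Fin d) (Fin d) ℝ) (m : Fin d → ℝ) :
    Continuous (gaussMat d m S) := by
  unfold gaussMat
  fun_prop

lemma map_symm {d : ℕ} {B : Matrix (Fin d) (Fin d) ℝ} (hBs : Bᵀ = B) (hB : B.det ≠ 0)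
    (g : (Fin d → ℝ) → ℂ) (hg : Continuous g) :
    (∫ ω, ((gaussMat d 0 (B * B) ω : ℝ) : ℂ) * g ω =
      ∫ z : Fin d → ℝ, (((2 * Real.pi) ^ (-(d : ℝ) / 2) : ℝ) : ℂ) *
        (Complex.exp (-(1/2 : ℂ) * ∑ i, (z i : ℂ) ^ 2) * g (B *ᵥ z))) ∧
    (Integrable (fun ω => ((gaussMat d 0 (B * B) ω : ℝ) : ℂ) * g ω) ↔
      Integrable (fun z : Fin d → ℝ => (((2 * Real.pi) ^ (-(d : ℝ) / 2) : ℝ) : ℂ) *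
        (Complex.exp (-(1/2 : ℂ) * ∑ i, (z i : ℂ) ^ 2) * g (B *ᵥ z)))) := by
  have hm := Real.map_matrix_volume_pi_eq_smul_volume_pi hB
  have hc0 : 0 < |B.det⁻¹| := by positivity
  have hv : (volume : Measure (Fin d → ℝ)) = ENNReal.ofReal |B.det| • Measure.map (toLin' B) volume := by
    rw [hm, smul_smul, ← ENNReal.ofReal_mul (abs_nonneg _), ← abs_mul, mul_inv_cancel₀ hB]
    simp
  have hcont : Continuous (toLin' B) := LinearMap.continuous_of_finiteDimensional _
  have hF : Continuous (fun ω => ((gaussMat d 0 (B * B) ω : ℝ) : ℂ) * g ω) :=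
    (Complex.continuous_ofReal.comp (gaussMat_cont _ _)).mul hg
  have hpt : ∀ z : Fin d → ℝ, ((gaussMat d 0 (B * B) (B *ᵥ z) : ℝ) : ℂ) * g (B *ᵥ z) =
      ((|B.det⁻¹| : ℝ) : ℂ) * ((((2 * Real.pi) ^ (-(d : ℝ) / 2) : ℝ) : ℂ) *
        (Complex.exp (-(1/2 : ℂ) * ∑ i, (z i : ℂ) ^ 2) * g (B *ᵥ z))) := by
    intro z
    have : z ⬝ᵥ z = ∑ i, z i ^ 2 := by simp [dotProduct, sq]
    rw [gaussMat, sub_zero, quad_part hBs hB, det_part hB, this]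
    push_cast
    ring
  constructor
  · rw [hv, integral_smul_measure, integral_map hcont.aemeasurable hF.aestronglyMeasurable]
    simp only [toLin'_apply, hpt]
    rw [integral_const_mul, ← hv]
    rw [ENNReal.toReal_ofReal (abs_nonneg _), Complex.real_smul, ← mul_assoc,
      ← Complex.ofReal_mul, ← abs_mul, mul_inv_cancel₀ hB]
    simp
  · conv_lhs => rw [hv]
    rw [integrable_smul_measure (by simpa using hB) (by simp),
      integrable_map_measure hF.aestronglyMeasurable hcont.aemeasurable]
    simp only [Function.comp_def, toLin'_apply, hpt]
    rw [integrable_const_mul_iff]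
    simpa using hB

lemma gauss_char {d : ℕ} {S : Matrix (Fin d) (Fin d) ℝ} (hS : S.PosDef) (u : Fin d → ℝ) (t : ℝ) :
    Integrable (fun ω => ((gaussMat d 0 S ω : ℝ) : ℂ) * Complex.exp (t * (u ⬝ᵥ ω : ℝ) * Complex.I)) ∧
    ∫ ω, ((gaussMat d 0 S ω : ℝ) : ℂ) * Complex.exp (t * (u ⬝ᵥ ω : ℝ) * Complex.I) =
      Complex.exp (-((u ⬝ᵥ S *ᵥ u : ℝ) * t ^ 2 / 2)) := by
  obtain ⟨B, hBs, rfl, hB⟩ := exists_symm_sqrt hS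
  have hm := map_symm hBs hB (fun ω => Complex.exp (t * (u ⬝ᵥ ω : ℝ) * Complex.I)) (by fun_prop)
  have hpt : ∀ z : Fin d → ℝ, Complex.exp (-(1/2 : ℂ) * ∑ i, (z i : ℂ) ^ 2) *
      Complex.exp (t * (u ⬝ᵥ (B *ᵥ z) : ℝ) * Complex.I) =
      Complex.exp (-(1/2 : ℂ) * ∑ i, (z i : ℂ) ^ 2 +
        ∑ i, (t * Complex.I * ((B *ᵥ u) i : ℝ)) * z i) := by
    intro z
    rw [← Complex.exp_add]
    congr 2
    rw [Matrix.dotProduct_mulVec, ← Matrix.mulVec_transpose, hBs, dotProduct]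
    push_cast
    rw [Finset.mul_sum, Finset.sum_mul]
    refine Finset.sum_congr rfl fun i _ => ?_
    ring
  simp only [hpt] at hm
  constructor
  · rw [hm.2]
    exact (GaussianFourier.integrable_cexp_neg_mul_sum_add (by norm_num) _).const_mul _
  · rw [hm.1, integral_const_mul, GaussianFourier.integral_cexp_neg_mul_sum_add (by norm_num),
      ← mul_assoc]
    have h1 : (((2 * Real.pi) ^ (-(d : ℝ) / 2) : ℝ) : ℂ) *
        ((Real.pi : ℂ) / (1 / 2)) ^ ((Fintype.card (Fin d) : ℂ) / 2) = 1 := by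
      have : ((Real.pi : ℂ) / (1 / 2)) ^ ((Fintype.card (Fin d) : ℂ) / 2) =
          (((2 * Real.pi) ^ ((d : ℝ) / 2) : ℝ) : ℂ) := by
        rw [Complex.ofReal_cpow (by positivity), Fintype.card_fin]
        congr 1 <;> push_cast <;> ring
      rw [this, ← Complex.ofReal_mul, ← Real.rpow_add (by positivity)]
      simp [neg_div]
    rw [h1, one_mul]
    congr 1
    have h2 : u ⬝ᵥ (B * B) *ᵥ u = ∑ i, (B *ᵥ u) i ^ 2 := by
      rw [← Matrix.mulVec_mulVec, Matrix.dotProduct_mulVec, ← Matrix.mulVec_transpose, hBs]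
      simp [dotProduct, sq]
    rw [h2]
    simp only [mul_pow, Complex.I_sq]
    rw [← Finset.mul_sum]
    push_cast
    ring

lemma gauss_law {d : ℕ} {S : Matrix (Fin d) (Fin d) ℝ} (hS : S.PosDef) (u : Fin d → ℝ) :
    (volume.withDensity (fun ω => ENNReal.ofReal (gaussMat d 0 S ω))).map (fun ω => u ⬝ᵥ ω) =
      ProbabilityTheory.gaussianReal 0 (u ⬝ᵥ S *ᵥ u).toNNReal := by
  have hi : Integrable (gaussMat d 0 S) := by
    have := (gauss_char hS u 0).1.re
    simpa using this
  haveI := isFiniteMeasure_withDensity_ofReal hi.2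
  have hc : Continuous (fun ω : Fin d → ℝ => u ⬝ᵥ ω) := by fun_prop
  apply Measure.ext_of_charFun
  ext t
  rw [charFun_apply_real, ProbabilityTheory.charFun_gaussianReal,
    integral_map hc.aemeasurable (by fun_prop),
    integral_withDensity_eq_integral_toReal_smul
      ((gaussMat_cont S 0).measurable.ennreal_ofReal) (by simp)]
  have := (gauss_char hS u t).2
  simp only [Complex.real_smul, ENNReal.toReal_ofReal (gaussMat_pos hS _ _).le]
  rw [this, Real.coe_toNNReal]
  · congr 1; simp
  · simpa using hS.posSemidef.dotProduct_mulVec_nonneg u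

lemma gauss_shift {d : ℕ} {S : Matrix (Fin d) (Fin d) ℝ} (hS : S.PosDef) (ν ω : Fin d → ℝ) :
    gaussMat d ν S ω = gaussMat d 0 S ω *
      Real.exp ((S⁻¹ *ᵥ ν) ⬝ᵥ ω - (ν ⬝ᵥ S⁻¹ *ᵥ ν) / 2) := by
  have hsym : (S⁻¹)ᵀ = S⁻¹ := by
    have := hS.inv.isHermitian
    simpa [Matrix.IsHermitian] using this
  have h1 : ν ⬝ᵥ S⁻¹ *ᵥ ω = (S⁻¹ *ᵥ ν) ⬝ᵥ ω := by
    rw [Matrix.dotProduct_mulVec, ← Matrix.mulVec_transpose, hsym]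
  have h2 : ω ⬝ᵥ S⁻¹ *ᵥ ν = (S⁻¹ *ᵥ ν) ⬝ᵥ ω := dotProduct_comm _ _
  unfold gaussMat
  rw [mul_assoc, ← Real.exp_add]
  congr 2
  simp only [sub_zero, Matrix.mulVec_sub, dotProduct_sub, sub_dotProduct, h1, h2]
  ring

lemma inv_quad {d : ℕ} {S : Matrix (Fin d) (Fin d) ℝ} (hS : S.PosDef) (ν : Fin d → ℝ) :
    (S⁻¹ *ᵥ ν) ⬝ᵥ S *ᵥ (S⁻¹ *ᵥ ν) = ν ⬝ᵥ S⁻¹ *ᵥ ν := by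
  rw [Matrix.mulVec_mulVec, Matrix.mul_nonsing_inv _ (isUnit_iff_ne_zero.mpr hS.det_pos.ne'),
    Matrix.one_mulVec, dotProduct_comm]

lemma inv_quad_nonneg {d : ℕ} {S : Matrix (Fin d) (Fin d) ℝ} (hS : S.PosDef) (ν : Fin d → ℝ) :
    0 ≤ ν ⬝ᵥ S⁻¹ *ᵥ ν := by
  simpa using hS.inv.posSemidef.dotProduct_mulVec_nonneg ν

lemma component {d : ℕ} {S : Matrix (Fin d) (Fin d) ℝ} (hS : S.PosDef) (ν : Fin d → ℝ)
    {q l : ℝ} (hq0 : 0 < q) (hq1 : q ≤ 1) (hl : 0 ≤ l) :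
    Integrable (fun ω => (gaussMat d 0 S ω /
      ((1 - q) * gaussMat d 0 S ω + q * gaussMat d ν S ω)) ^ l * gaussMat d 0 S ω) ∧
    ∫ ω, (gaussMat d 0 S ω /
      ((1 - q) * gaussMat d 0 S ω + q * gaussMat d ν S ω)) ^ l * gaussMat d 0 S ω =
    ∫ x : ℝ, (1 - q + q * Real.exp (x - (ν ⬝ᵥ S⁻¹ *ᵥ ν).toNNReal / 2)) ^ (-l)
      ∂(ProbabilityTheory.gaussianReal 0 (ν ⬝ᵥ S⁻¹ *ᵥ ν).toNNReal) := by
  have hlaw := gauss_law hS (S⁻¹ *ᵥ ν)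
  rw [inv_quad hS] at hlaw
  have hv := inv_quad_nonneg hS ν
  set v := ν ⬝ᵥ S⁻¹ *ᵥ ν with hvd
  have hint := phi_integrable q l (v.toNNReal / 2) hq0 hq1 hl v.toNNReal
  have hm : Measurable (fun ω : Fin d → ℝ => (S⁻¹ *ᵥ ν) ⬝ᵥ ω) := by
    have : Continuous (fun ω : Fin d → ℝ => (S⁻¹ *ᵥ ν) ⬝ᵥ ω) := by fun_prop
    exact this.measurable
  have hd := ((gaussMat_cont S 0).measurable.ennreal_ofReal)
  have hpt : ∀ ω, (gaussMat d 0 S ω /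
      ((1 - q) * gaussMat d 0 S ω + q * gaussMat d ν S ω)) ^ l * gaussMat d 0 S ω =
      (ENNReal.ofReal (gaussMat d 0 S ω)).toReal •
        (1 - q + q * Real.exp ((S⁻¹ *ᵥ ν) ⬝ᵥ ω - v.toNNReal / 2)) ^ (-l) := by
    intro ω
    have hp := gaussMat_pos hS 0 ω
    have hA : 0 < 1 - q + q * Real.exp ((S⁻¹ *ᵥ ν) ⬝ᵥ ω - v / 2) := by
      have : 0 < q * Real.exp ((S⁻¹ *ᵥ ν) ⬝ᵥ ω - v / 2) := by positivity
      linarith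
    rw [ENNReal.toReal_ofReal hp.le, gauss_shift hS ν, ← hvd, Real.coe_toNNReal _ hv, smul_eq_mul,
      mul_comm, Real.rpow_neg hA.le, ← Real.inv_rpow hA.le]
    congr 2
    field_simp
  simp only [hpt]
  rw [← hlaw] at hint ⊢
  rw [integral_map hm.aemeasurable hint.1, integral_withDensity_eq_integral_toReal_smul hd (by simp)]
  refine ⟨?_, rfl⟩
  rw [integrable_map_measure hint.1 hm.aemeasurable,
    integrable_withDensity_iff_integrable_smul' hd (by simp)] at hint
  exact hint

lemma G_mono' {q l : ℝ} (hq0 : 0 < q) (hq1 : q ≤ 1) (hl : 0 ≤ l) {v w : NNReal} (h : v ≤ w) :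
    ∫ x : ℝ, (1 - q + q * Real.exp (x - v / 2)) ^ (-l) ∂(ProbabilityTheory.gaussianReal 0 v) ≤
    ∫ x : ℝ, (1 - q + q * Real.exp (x - w / 2)) ^ (-l)
      ∂(ProbabilityTheory.gaussianReal 0 w) := by
  have := G_mono q l hq0 hq1 hl v (w - v)
  rwa [add_tsub_cancel_of_le h] at this

lemma iso_posDef {d : ℕ} {σ : ℝ} (hσ : 0 < σ) :
    (σ ^ 2 • (1 : Matrix (Fin d) (Fin d) ℝ)).PosDef :=
  Matrix.PosDef.one.smul (by positivity)

lemma iso_inv {d : ℕ} {σ : ℝ} (hσ : 0 < σ) :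
    (σ ^ 2 • (1 : Matrix (Fin d) (Fin d) ℝ))⁻¹ = (σ ^ 2)⁻¹ • (1 : Matrix (Fin d) (Fin d) ℝ) := by
  apply Matrix.inv_eq_left_inv
  rw [Matrix.smul_mul, Matrix.one_mul, smul_smul, inv_mul_cancel₀ (by positivity), one_smul]

lemma gaussIso_eq {d : ℕ} {σ : ℝ} (hσ : 0 < σ) (ν ω : Fin d → ℝ) :
    gaussIso d σ (ω - ν) = gaussMat d ν (σ ^ 2 • (1 : Matrix (Fin d) (Fin d) ℝ)) ω := by
  unfold gaussIso gaussMat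
  rw [iso_inv hσ, Matrix.det_smul, Matrix.det_one, mul_one, Fintype.card_fin, ← mul_pow,
    ← Real.rpow_natCast _ d, ← Real.rpow_mul (by positivity), Matrix.smul_mulVec, Matrix.one_mulVec,
    dotProduct_smul, smul_eq_mul]
  congr 2
  · ring
  · field_simp

lemma inv_quad_le {d : ℕ} {S : Matrix (Fin d) (Fin d) ℝ} {σ : ℝ} (hσ : 0 < σ) (hS : S.PosDef)
    (hmin : (S - σ ^ 2 • (1 : Matrix (Fin d) (Fin d) ℝ)).PosSemidef) (ν : Fin d → ℝ) :
    ν ⬝ᵥ S⁻¹ *ᵥ ν ≤ ν ⬝ᵥ (σ ^ 2 • (1 : Matrix (Fin d) (Fin d) ℝ))⁻¹ *ᵥ ν := by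
  have h1 := inv_quad hS ν
  have h2 : ν ⬝ᵥ S⁻¹ *ᵥ ν = (S⁻¹ *ᵥ ν) ⬝ᵥ ν := dotProduct_comm _ _
  set u := S⁻¹ *ᵥ ν
  have h3 : 0 ≤ u ⬝ᵥ (S - σ ^ 2 • (1 : Matrix (Fin d) (Fin d) ℝ)) *ᵥ u := by
    simpa using hmin.dotProduct_mulVec_nonneg u
  rw [Matrix.sub_mulVec, dotProduct_sub, Matrix.smul_mulVec, Matrix.one_mulVec, dotProduct_smul,
    smul_eq_mul, h1] at h3
  have h4 : 0 ≤ (σ • u - σ⁻¹ • ν) ⬝ᵥ (σ • u - σ⁻¹ • ν) := by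
    simp only [dotProduct]
    exact Finset.sum_nonneg fun i _ => mul_self_nonneg _
  simp only [dotProduct_sub, sub_dotProduct, dotProduct_smul, smul_dotProduct, smul_eq_mul] at h4
  rw [iso_inv hσ, Matrix.smul_mulVec, Matrix.one_mulVec, dotProduct_smul, smul_eq_mul]
  rw [dotProduct_comm ν u] at *
  have h5 : σ * (σ⁻¹ * (u ⬝ᵥ ν)) = u ⬝ᵥ ν := by field_simp
  have h6 : σ⁻¹ * (σ * (u ⬝ᵥ ν)) = u ⬝ᵥ ν := by field_simp
  have h7 : σ⁻¹ * (σ⁻¹ * (ν ⬝ᵥ ν)) = (σ ^ 2)⁻¹ * (ν ⬝ᵥ ν) := by field_simp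
  nlinarith

/-- Reduction to the worst-case isotropic Gaussian: for a mixture `f₀` of centered
Gaussians with component covariances `Σ_J` satisfying `λ_min(Σ_J) ≥ σ²` and the
corresponding shifted mixture `f₁`, the `λ`-th ratio moment `E_{ω∼f₀}[(f₀/f₁)^λ]` is
bounded by the corresponding moment for a single isotropic Gaussian `N(0, σ²I)` against
its `q`-mixture with the `ν`-translate. -/
theorem mixture_ratio_moment_reduction {d N : ℕ} (L : ℕ) (hLN : L ≤ N)
    (SigJ : Finset (Fin N) → Matrix (Fin d) (Fin d) ℝ)
    (σ q lam : ℝ) (ν : Fin d → ℝ)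
    (hσ : 0 < σ) (hq0 : 0 < q) (hq1 : q ≤ 1) (hlam : 1 ≤ lam)
    (hν : ν ⬝ᵥ ν ≤ 1)
    (hPD : ∀ J : Finset (Fin N), L ≤ J.card → (SigJ J).PosDef)
    (hmin : ∀ J : Finset (Fin N), L ≤ J.card →
      (SigJ J - σ ^ 2 • (1 : Matrix (Fin d) (Fin d) ℝ)).PosSemidef) :
    letI SS := (Finset.univ : Finset (Finset (Fin N))).filter (fun J => L ≤ J.card)
    letI c₀ := (∑ J ∈ SS, q ^ J.card * (1 - q) ^ (N - J.card))⁻¹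
    letI f₀ := fun ω : Fin d → ℝ =>
      c₀ * ∑ J ∈ SS, q ^ J.card * (1 - q) ^ (N - J.card) * gaussMat d 0 (SigJ J) ω
    letI f₁ := fun ω : Fin d → ℝ =>
      c₀ * ∑ J ∈ SS, q ^ J.card * (1 - q) ^ (N - J.card) *
        ((1 - q) * gaussMat d 0 (SigJ J) ω + q * gaussMat d ν (SigJ J) ω)
    ∫ ω : Fin d → ℝ, (f₀ ω / f₁ ω) ^ lam * f₀ ω ≤
      ∫ ω : Fin d → ℝ,
        (gaussIso d σ ω / ((1 - q) * gaussIso d σ ω + q * gaussIso d σ (ω - ν))) ^ lam *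
          gaussIso d σ ω := by
  let SS := (Finset.univ : Finset (Finset (Fin N))).filter (fun J => L ≤ J.card)
  let c₀ := (∑ J ∈ SS, q ^ J.card * (1 - q) ^ (N - J.card))⁻¹
  let f₀ := fun ω : Fin d → ℝ =>
    c₀ * ∑ J ∈ SS, q ^ J.card * (1 - q) ^ (N - J.card) * gaussMat d 0 (SigJ J) ω
  let f₁ := fun ω : Fin d → ℝ =>
    c₀ * ∑ J ∈ SS, q ^ J.card * (1 - q) ^ (N - J.card) *
      ((1 - q) * gaussMat d 0 (SigJ J) ω + q * gaussMat d ν (SigJ J) ω)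
  change ∫ ω : Fin d → ℝ, (f₀ ω / f₁ ω) ^ lam * f₀ ω ≤
      ∫ ω : Fin d → ℝ,
        (gaussIso d σ ω / ((1 - q) * gaussIso d σ ω + q * gaussIso d σ (ω - ν))) ^ lam *
          gaussIso d σ ω
  have hl : 0 ≤ lam := by linarith
  set w : Finset (Fin N) → ℝ := fun J => q ^ J.card * (1 - q) ^ (N - J.card) with hw
  have hw0 : ∀ J, 0 ≤ w J := fun J =>
    mul_nonneg (pow_nonneg hq0.le _) (pow_nonneg (by linarith) _)
  have hSS : ∀ J ∈ SS, L ≤ J.card := fun J hJ => (Finset.mem_filter.mp hJ).2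
  have hW : 0 < ∑ J ∈ SS, w J := by
    refine Finset.sum_pos' (fun J _ => hw0 J) ⟨Finset.univ, ?_, ?_⟩
    · exact Finset.mem_filter.mpr ⟨Finset.mem_univ _, by simpa using hLN⟩
    · simp only [hw, Finset.card_univ, Fintype.card_fin, Nat.sub_self, pow_zero, mul_one]
      positivity
  have hc : c₀ * ∑ J ∈ SS, w J = 1 := inv_mul_cancel₀ hW.ne'
  have hc0 : 0 < c₀ := inv_pos.mpr hW
  set F : Finset (Fin N) → (Fin d → ℝ) → ℝ := fun J ω => (gaussMat d 0 (SigJ J) ω /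
      ((1 - q) * gaussMat d 0 (SigJ J) ω + q * gaussMat d ν (SigJ J) ω)) ^ lam *
        gaussMat d 0 (SigJ J) ω with hF
  have hFc := fun J hJ => component (hPD J (hSS J hJ)) ν hq0 hq1 hl
  have hiso := component (iso_posDef (d := d) hσ) ν hq0 hq1 hl
  have e0 : ∀ ω, gaussIso d σ ω = gaussMat d 0 (σ ^ 2 • (1 : Matrix (Fin d) (Fin d) ℝ)) ω :=
    fun ω => by rw [← gaussIso_eq hσ, sub_zero]
  simp only [gaussIso_eq hσ, e0]
  rw [hiso.2]
  set G := ∫ x : ℝ, (1 - q + q * Real.exp (x - (ν ⬝ᵥ (σ ^ 2 •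
      (1 : Matrix (Fin d) (Fin d) ℝ))⁻¹ *ᵥ ν).toNNReal / 2)) ^ (-lam)
      ∂(ProbabilityTheory.gaussianReal 0 (ν ⬝ᵥ (σ ^ 2 •
      (1 : Matrix (Fin d) (Fin d) ℝ))⁻¹ *ᵥ ν).toNNReal)
  have hFG : ∀ J ∈ SS, ∫ ω, F J ω ≤ G := by
    intro J hJ
    simp only [hF]
    rw [(hFc J hJ).2]
    exact G_mono' hq0 hq1 hl
      (Real.toNNReal_le_toNNReal (inv_quad_le hσ (hPD J (hSS J hJ)) (hmin J (hSS J hJ)) ν))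
  have hpos : ∀ J ∈ SS, ∀ ω, 0 < gaussMat d 0 (SigJ J) ω := fun J hJ ω =>
    gaussMat_pos (hPD J (hSS J hJ)) _ _
  have hposν : ∀ J ∈ SS, ∀ ω, 0 < (1 - q) * gaussMat d 0 (SigJ J) ω +
      q * gaussMat d ν (SigJ J) ω := fun J hJ ω => by
    have h1 := mul_nonneg (sub_nonneg.mpr hq1) (hpos J hJ ω).le
    have h2 := mul_pos hq0 (gaussMat_pos (hPD J (hSS J hJ)) ν ω)
    linarith
  have hint : ∀ J ∈ SS, Integrable (fun ω => w J * F J ω) := fun J hJ => (hFc J hJ).1.const_mul _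
  have hpt : ∀ ω, (f₀ ω / f₁ ω) ^ lam * f₀ ω ≤ c₀ * ∑ J ∈ SS, w J * F J ω := by
    intro ω
    have := jensen_ratio SS w (fun J => gaussMat d 0 (SigJ J) ω)
      (fun J => (1 - q) * gaussMat d 0 (SigJ J) ω + q * gaussMat d ν (SigJ J) ω) hl
      (fun J _ => hw0 J) hW (fun J hJ => hpos J hJ ω) (fun J hJ => hposν J hJ ω)
    simp only [f₀, f₁]
    rw [mul_div_mul_left _ _ hc0.ne', mul_left_comm]
    exact mul_le_mul_of_nonneg_left this hc0.le
  have hnn : ∀ ω, 0 ≤ (f₀ ω / f₁ ω) ^ lam * f₀ ω := by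
    intro ω
    have h0 : 0 ≤ f₀ ω := mul_nonneg hc0.le
      (Finset.sum_nonneg fun J hJ => mul_nonneg (hw0 J) (hpos J hJ ω).le)
    have h1 : 0 ≤ f₁ ω := mul_nonneg hc0.le
      (Finset.sum_nonneg fun J hJ => mul_nonneg (hw0 J) (hposν J hJ ω).le)
    positivity
  calc ∫ ω : Fin d → ℝ, (f₀ ω / f₁ ω) ^ lam * f₀ ω
      ≤ ∫ ω : Fin d → ℝ, c₀ * ∑ J ∈ SS, w J * F J ω :=
        integral_mono_of_nonneg (ae_of_all _ hnn)
          ((integrable_finsetSum _ hint).const_mul _) (ae_of_all _ hpt)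
    _ = c₀ * ∑ J ∈ SS, w J * ∫ ω, F J ω := by
        rw [integral_const_mul, integral_finsetSum _ hint]
        simp only [integral_const_mul]
    _ ≤ c₀ * ∑ J ∈ SS, w J * G := by
        refine mul_le_mul_of_nonneg_left (Finset.sum_le_sum fun J hJ => ?_) hc0.le
        exact mul_le_mul_of_nonneg_left (hFG J hJ) (hw0 J)
    _ = G := by rw [← Finset.sum_mul, ← mul_assoc, hc, one_mul]
end
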